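/- Let Y be a complex Hilbert space and C ⊆ Y ⊕ Y a selfadjoint relation (C = C*). Let U be the closure in Y of the pre-set [Y]C = {u : ∃ v, (u,v) ∈ C}. Then there exists a selfadjoint linear operator S : [Y]C ⊆ U → U (densely defined in U, with S = S* as a relation in U ⊕ U) such that C = S ⊕ ({0} × U^⊥), i.e. C = {(u, Su + n) : u ∈ [Y]C, n ∈ U^⊥}. -/

import Mathlib

open scoped ComplexInnerProductSpace

/-- The pre-set `[Y]C = {u : ∃ v, (u,v) ∈ C}` of a relation `C ⊆ Y ⊕ Y`. -/
def preSet {Y : Type*} [NormedAddCommGroup Y] [InnerProductSpace ℂ Y]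
    (C : Set (Y × Y)) : Set Y :=
  {u | ∃ v, (u, v) ∈ C}

/-- The adjoint relation `C* = {(v,−u) : (u,v) ∈ C}^⊥` (orthogonal complement in `Y ⊕ Y`):
`(x,y) ∈ C*` iff `⟪v,x⟫ = ⟪u,y⟫` for all `(u,v) ∈ C`. -/
def adjointRel {Y : Type*} [NormedAddCommGroup Y] [InnerProductSpace ℂ Y]
    (C : Set (Y × Y)) : Set (Y × Y) :=
  {q | ∀ p ∈ C, (⟪p.2, q.1⟫ : ℂ) = ⟪p.1, q.2⟫}

/-!
Let `D` be the domain of the selfadjoint relation `C` and `U` its closure. Testing `(0, n)` against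
`C` shows that `(0, n) ∈ C* = C` exactly when `n ∈ Dᗮ = Uᗮ`. Hence `C` does not change when a vector
of `Uᗮ` is added to the second component of one of its elements, so projecting second components
onto `U` stays inside `C`, and the part of `C` with values in `U` is single-valued because
`U ∩ Uᗮ = 0`. For arguments in `U`, pairing with `C` and with that part give the same conditions,
as `{0} × Uᗮ` contributes nothing; therefore that part inherits selfadjointness in `U ⊕ U`.
-/

/-- A linear relation between `E` and `F`: a linear subspace of `E × F`, not assumed to be closed or
to be the graph of an operator. -/
abbrev LinearRelation (R E F : Type*) [Semiring R] [AddCommMonoid E] [AddCommMonoid F]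
    [Module R E] [Module R F] : Type _ :=
  Submodule R (E × F)

open scoped InnerProductSpace

namespace LinearRelation

section Domain

variable {R E F : Type*} [Semiring R] [AddCommMonoid E] [AddCommMonoid F] [Module R E] [Module R F]

/-- The domain (pre-set) of a linear relation. It is a copy of the image under the first projection,
so that membership unfolds to the same condition as for `preSet`. -/
def domain (C : LinearRelation R E F) : Submodule R E :=
  (C.map (LinearMap.fst R E F)).copy {u | ∃ v, (u, v) ∈ C} (by ext; simp)

theorem domain_eq_map_fst (C : LinearRelation R E F) : C.domain = C.map (LinearMap.fst R E F) :=
  Submodule.copy_eq ..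

theorem mem_domain_of_mem {C : LinearRelation R E F} {u : E} {v : F} (h : (u, v) ∈ C) :
    u ∈ C.domain :=
  ⟨v, h⟩

theorem exists_linearMap_mem_iff {K V W : Type*} [DivisionRing K] [AddCommGroup V]
    [AddCommGroup W] [Module K V] [Module K W] {C : LinearRelation K V W}
    (hC : ∀ w, (0, w) ∈ C → w = 0) :
    ∃ S : V →ₗ[K] W, ∀ u v, (u, v) ∈ C ↔ u ∈ C.domain ∧ v = S u := by
  obtain ⟨S, hS⟩ := C.toLinearPMap.toFun.exists_extend
  have mem_of_mem_domain {u : V} (hu : u ∈ C.domain) : (u, S u) ∈ C := by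
    rw [domain_eq_map_fst] at hu
    have hSu : S u = C.toLinearPMap ⟨u, hu⟩ := LinearMap.congr_fun hS ⟨u, hu⟩
    rw [hSu]
    exact C.mem_graph_toLinearPMap (fun ⟨_, w⟩ hw h0 ↦ hC w (h0 ▸ hw)) ⟨u, hu⟩
  refine ⟨S, fun u v ↦ ⟨fun h ↦ ⟨mem_domain_of_mem h, ?_⟩, ?_⟩⟩
  · have hsub : (0, v - S u) ∈ C := by
      simpa using C.sub_mem h (mem_of_mem_domain (mem_domain_of_mem h))
    exact sub_eq_zero.1 (hC _ hsub)
  · rintro ⟨hu, rfl⟩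
    exact mem_of_mem_domain hu

end Domain

section Adjoint

variable {𝕜 E F : Type*} [RCLike 𝕜] [NormedAddCommGroup E] [InnerProductSpace 𝕜 E]
  [NormedAddCommGroup F] [InnerProductSpace 𝕜 F]

theorem mem_adjoint_iff_inner_eq {C : LinearRelation 𝕜 E F} {q : F × E} :
    q ∈ C.adjoint ↔ ∀ p ∈ C, ⟪p.2, q.1⟫_𝕜 = ⟪p.1, q.2⟫_𝕜 := by
  simp [sub_eq_zero]

theorem adjoint_anti {C D : LinearRelation 𝕜 E F} (h : C ≤ D) : D.adjoint ≤ C.adjoint := by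
  simp only [SetLike.le_def, mem_adjoint_iff_inner_eq]
  exact fun _ hq p hp ↦ hq p (h hp)

theorem zero_mk_mem_adjoint_iff {C : LinearRelation 𝕜 E F} {w : E} :
    (0, w) ∈ C.adjoint ↔ w ∈ C.domainᗮ := by
  rw [mem_adjoint_iff_inner_eq, Submodule.mem_orthogonal]
  constructor
  · rintro h u ⟨v, huv⟩
    simpa using (h (u, v) huv).symm
  · rintro h ⟨u, v⟩ huv
    simpa using (h u (mem_domain_of_mem huv)).symm

end Adjoint

section OperatorPart

variable {𝕜 E : Type*} [RCLike 𝕜] [NormedAddCommGroup E] [InnerProductSpace 𝕜 E]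
  {C : LinearRelation 𝕜 E E}

/-- The operator part of a linear relation: its elements whose second component lies in the closure
of the domain. For a selfadjoint relation it is the graph of the operator in the decomposition. -/
def operatorPart (C : LinearRelation 𝕜 E E) : LinearRelation 𝕜 E E :=
  C ⊓ Submodule.prod ⊤ C.domain.topologicalClosure

theorem mk_mem_operatorPart {u v : E} :
    (u, v) ∈ C.operatorPart ↔ (u, v) ∈ C ∧ v ∈ C.domain.topologicalClosure := by
  simp [operatorPart]

theorem eq_zero_of_zero_mk_mem_operatorPart (hC : C ≤ C.adjoint) {w : E}
    (hw : (0, w) ∈ C.operatorPart) : w = 0 := by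
  obtain ⟨hwC, hwU⟩ := mk_mem_operatorPart.1 hw
  have hw_orth : w ∈ C.domain.topologicalClosureᗮ := by
    rw [Submodule.orthogonal_closure]
    exact zero_mk_mem_adjoint_iff.1 (hC hwC)
  exact Submodule.disjoint_def.1 (Submodule.orthogonal_disjoint _) w hwU hw_orth

theorem mk_add_mem (hC : C.adjoint ≤ C) {u v n : E} (huv : (u, v) ∈ C) (hn : n ∈ C.domainᗮ) :
    (u, v + n) ∈ C := by
  simpa using C.add_mem huv (hC (zero_mk_mem_adjoint_iff.2 hn))

variable [C.domain.topologicalClosure.HasOrthogonalProjection]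

theorem mk_mem_iff_exists_operatorPart (hC : C.adjoint ≤ C) {u v : E} :
    (u, v) ∈ C ↔ ∃ w, (u, w) ∈ C.operatorPart ∧ ∃ n ∈ C.domainᗮ, v = w + n := by
  constructor
  · intro huv
    obtain ⟨w, hw, n, hn, rfl⟩ := C.domain.topologicalClosure.exists_add_mem_mem_orthogonal v
    rw [Submodule.orthogonal_closure] at hn
    have huw : (u, w) ∈ C := by simpa using mk_add_mem hC huv (neg_mem hn)
    exact ⟨w, mk_mem_operatorPart.2 ⟨huw, hw⟩, n, hn, rfl⟩
  · rintro ⟨w, hw, n, hn, rfl⟩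
    exact mk_add_mem hC (mk_mem_operatorPart.1 hw).1 hn

theorem domain_operatorPart (hC : C.adjoint ≤ C) : C.operatorPart.domain = C.domain := by
  refine le_antisymm (fun u ⟨v, huv⟩ ↦ ⟨v, huv.1⟩) fun u ⟨v, huv⟩ ↦ ?_
  obtain ⟨w, hw, -⟩ := (mk_mem_iff_exists_operatorPart hC).1 huv
  exact mem_domain_of_mem hw

theorem mem_adjoint_of_mem_adjoint_operatorPart (hC : C.adjoint ≤ C) {a b : E}
    (ha : a ∈ C.domain.topologicalClosure) (hab : (a, b) ∈ C.operatorPart.adjoint) :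
    (a, b) ∈ C.adjoint := by
  rw [mem_adjoint_iff_inner_eq] at hab ⊢
  rintro ⟨u, v⟩ huv
  obtain ⟨w, hw, n, hn, rfl⟩ := (mk_mem_iff_exists_operatorPart hC).1 huv
  rw [← Submodule.orthogonal_closure] at hn
  calc
    ⟪w + n, a⟫_𝕜 = ⟪w, a⟫_𝕜 := by
      rw [inner_add_left, Submodule.inner_left_of_mem_orthogonal ha hn, add_zero]
    _ = ⟪u, b⟫_𝕜 := hab (u, w) hw

theorem operatorPart_eq_adjoint_inf_prod (hC : C.adjoint = C) :
    C.operatorPart = C.operatorPart.adjoint ⊓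
      Submodule.prod C.domain.topologicalClosure C.domain.topologicalClosure := by
  apply le_antisymm
  · rintro ⟨u, v⟩ huv
    obtain ⟨hC_mem, hv⟩ := mk_mem_operatorPart.1 huv
    have hu : u ∈ C.domain.topologicalClosure :=
      C.domain.le_topologicalClosure (mem_domain_of_mem hC_mem)
    exact ⟨adjoint_anti inf_le_left (hC.ge hC_mem), hu, hv⟩
  · rintro ⟨a, b⟩ ⟨hab, ha, hb⟩
    have hC_mem : (a, b) ∈ C := hC.le (mem_adjoint_of_mem_adjoint_operatorPart hC.le ha hab)
    exact mk_mem_operatorPart.2 ⟨hC_mem, hb⟩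

end OperatorPart

end LinearRelation

open LinearRelation

/-- Outside `C.domain` the map `S` is an arbitrary linear extension of the operator. -/
theorem arens_decomposition_general {𝕜 E : Type*} [RCLike 𝕜] [NormedAddCommGroup E]
    [InnerProductSpace 𝕜 E] (C : LinearRelation 𝕜 E E)
    [C.domain.topologicalClosure.HasOrthogonalProjection] (hC : C.adjoint = C) :
    ∃ S : E →ₗ[𝕜] E,
      (∀ u ∈ C.domain, S u ∈ C.domain.topologicalClosure) ∧
      ({p : E × E | p.1 ∈ C.domain ∧ p.2 = S p.1} =
        {q : E × E | q.1 ∈ C.domain.topologicalClosure ∧ q.2 ∈ C.domain.topologicalClosure ∧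
          ∀ u ∈ C.domain, ⟪S u, q.1⟫_𝕜 = ⟪u, q.2⟫_𝕜}) ∧
      (C : Set (E × E)) = {q : E × E | ∃ u ∈ C.domain, ∃ n : E,
        n ∈ C.domain.topologicalClosureᗮ ∧ q = (u, S u + n)} := by
  obtain ⟨S, hS⟩ := exists_linearMap_mem_iff fun _ ↦ eq_zero_of_zero_mk_mem_operatorPart hC.ge
  rw [domain_operatorPart hC.le] at hS
  have hS_mem {u : E} (hu : u ∈ C.domain) : (u, S u) ∈ C.operatorPart := (hS u _).2 ⟨hu, rfl⟩
  refine ⟨S, fun u hu ↦ (mk_mem_operatorPart.1 (hS_mem hu)).2, ?_, ?_⟩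
  · ext ⟨a, b⟩
    have hadj : (a, b) ∈ C.operatorPart.adjoint ↔ ∀ u ∈ C.domain, ⟪S u, a⟫_𝕜 = ⟪u, b⟫_𝕜 := by
      simp [hS, sub_eq_zero]
    change a ∈ C.domain ∧ b = S a ↔ _
    rw [← hS, operatorPart_eq_adjoint_inf_prod hC, Submodule.mem_inf, hadj, and_comm]
    exact and_assoc
  · ext ⟨a, b⟩
    rw [SetLike.mem_coe, mk_mem_iff_exists_operatorPart hC.le, ← Submodule.orthogonal_closure]
    simp only [hS, Set.mem_ofPred_eq, Prod.mk.injEq]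
    constructor
    · rintro ⟨_, ⟨ha, rfl⟩, n, hn, hb⟩
      exact ⟨a, ha, n, hn, rfl, hb⟩
    · rintro ⟨_, ha, n, hn, rfl, hb⟩
      exact ⟨S a, ⟨ha, rfl⟩, n, hn, hb⟩

theorem coe_adjoint_span {Y : Type*} [NormedAddCommGroup Y] [InnerProductSpace ℂ Y]
    (C : Set (Y × Y)) : ((Submodule.span ℂ C).adjoint : Set (Y × Y)) = adjointRel C := by
  ext q
  rw [SetLike.mem_coe, mem_adjoint_iff_inner_eq]
  refine ⟨fun h p hp ↦ h p (Submodule.subset_span hp), fun h p hp ↦ ?_⟩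
  induction hp using Submodule.span_induction with
  | mem p hp => exact h p hp
  | zero => simp
  | add p p' _ _ hp hp' => simp [inner_add_left, hp, hp']
  | smul c p _ hp => simp [inner_smul_left, hp]

theorem exists_linearRelation_of_eq_adjointRel {Y : Type*} [NormedAddCommGroup Y]
    [InnerProductSpace ℂ Y] {C : Set (Y × Y)} (hC : C = adjointRel C) :
    ∃ R : LinearRelation ℂ Y Y, (R : Set (Y × Y)) = C ∧ R.adjoint = R := by
  have hcoe : ((Submodule.span ℂ C).adjoint : Set (Y × Y)) = C := (coe_adjoint_span C).trans hC.symm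
  have hspan : Submodule.span ℂ C = (Submodule.span ℂ C).adjoint := by
    conv_lhs => rw [← hcoe, Submodule.span_eq]
  exact ⟨Submodule.span ℂ C, hspan ▸ hcoe, hspan.symm⟩

/-- **[Arens 1961, Theorem 5.3].** Let `C ⊆ Y ⊕ Y` be a selfadjoint relation and
`U := closure([Y]C)`. Then there is a selfadjoint linear operator `S : [Y]C ⊆ U → U`
(selfadjoint as a relation in `U ⊕ U`) such that `C = S ⊕ ({0} × U^⊥)`, i.e.
`C = {(u, Su + n) : u ∈ [Y]C, n ∈ U^⊥}`. -/
theorem arens_decomposition {Y : Type*} [NormedAddCommGroup Y] [InnerProductSpace ℂ Y]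
    [CompleteSpace Y] (C : Set (Y × Y)) (hC : C = adjointRel C) :
    ∃ S : Y → Y,
      -- `S` maps `[Y]C` into `U`
      (∀ u ∈ preSet C, S u ∈ closure (preSet C)) ∧
      -- `S` is linear on `[Y]C`
      (∀ u ∈ preSet C, ∀ v ∈ preSet C, u + v ∈ preSet C ∧ S (u + v) = S u + S v) ∧
      (∀ c : ℂ, ∀ u ∈ preSet C, c • u ∈ preSet C ∧ S (c • u) = c • S u) ∧
      -- `S` is selfadjoint as a relation in `U ⊕ U`: its graph coincides with its adjoint
      -- relation, the orthogonal complement being taken in `U ⊕ U`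
      ({p : Y × Y | p.1 ∈ preSet C ∧ p.2 = S p.1} =
        {q : Y × Y | q.1 ∈ closure (preSet C) ∧ q.2 ∈ closure (preSet C) ∧
          ∀ u ∈ preSet C, (⟪S u, q.1⟫ : ℂ) = ⟪u, q.2⟫}) ∧
      -- `C = S ⊕ ({0} × U^⊥)`
      C = {q : Y × Y | ∃ u ∈ preSet C, ∃ n : Y,
        (∀ y ∈ closure (preSet C), (⟪y, n⟫ : ℂ) = 0) ∧ q = (u, S u + n)} := by
  obtain ⟨R, rfl, hR⟩ := exists_linearRelation_of_eq_adjointRel hC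
  obtain ⟨S, hSU, hS, hdecomp⟩ := arens_decomposition_general R hR
  exact ⟨S, hSU, fun u hu v hv ↦ ⟨R.domain.add_mem hu hv, S.map_add u v⟩,
    fun c u hu ↦ ⟨R.domain.smul_mem c hu, S.map_smul c u⟩, hS, hdecomp⟩
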